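/- Every lattice L with more than one element has a proper congruence-preserving extension: there exist a lattice K and an injective, non-surjective lattice homomorphism f : L → K such that for every lattice congruence θ of L there is exactly one lattice congruence Θ of K with Θ(f x, f y) holding if and only if θ(x, y) holds, for all x, y ∈ L. -/

import Mathlib

universe u

/-- A lattice congruence. -/
def LatCon (L : Type*) [Lattice L] (θ : L → L → Prop) : Prop :=
  Equivalence θ ∧
  ∀ a b c d : L, θ a b → θ c d → θ (a ⊔ c) (b ⊔ d) ∧ θ (a ⊓ c) (b ⊓ d)

/-- `f : L → K` is a proper congruence-preserving extension: an injective,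
non-surjective lattice homomorphism such that every congruence of `L` extends to
exactly one congruence of `K`. -/
def IsProperCPExt (L : Type*) [Lattice L] (K : Type*) [Lattice K] (f : L → K) : Prop :=
  Function.Injective f ∧ ¬ Function.Surjective f ∧
  (∀ x y : L, f (x ⊔ y) = f x ⊔ f y) ∧ (∀ x y : L, f (x ⊓ y) = f x ⊓ f y) ∧
  ∀ θ : L → L → Prop, LatCon L θ →
    ∃! Θ : K → K → Prop, LatCon K Θ ∧ ∀ x y : L, (Θ (f x) (f y) ↔ θ x y)

/-!
Fix `a < b` in `L`. The extension `K` consists of the Boolean triples `(x, y, z)` with `a ≤ y ≤ b`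
and `z ≤ b`, and the embedding is `φ x = (x, a, x ⊓ a)`; it misses `(a, b, a)`.

A congruence of `L` extends to `K` componentwise, because the operations of `K` are lattice
polynomials in the components. For uniqueness, let `q` be a sufficiently small element of `L` and
put `p = (q, b, q)` and `d = (a, a, b)`. Every `s = (x, y, z)` is the join of its meets with `φ w`
(`x ≤ w`), `p` and `d`. The first of these meets is `φ x`. The other two are
`s ⊓ p = (φ y ⊔ d) ⊓ p` and `s ⊓ d = (φ z ⊔ p) ⊓ d`, and conversely `y` and `z` are the first
components of `(s ⊓ p) ⊔ d` and `(s ⊓ d) ⊔ p`. So a congruence relates `s` to `t` if and only if it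
relates the images under `φ` of their components.
-/

namespace LatCon

variable {L M : Type*} [Lattice L] [Lattice M] {θ : L → L → Prop} {a b c d : L}

lemma sup (hθ : LatCon L θ) (hab : θ a b) (hcd : θ c d) : θ (a ⊔ c) (b ⊔ d) :=
  (hθ.2 a b c d hab hcd).1

lemma inf (hθ : LatCon L θ) (hab : θ a b) (hcd : θ c d) : θ (a ⊓ c) (b ⊓ d) :=
  (hθ.2 a b c d hab hcd).2

lemma sup_right (hθ : LatCon L θ) (hab : θ a b) (c : L) : θ (a ⊔ c) (b ⊔ c) :=
  hθ.sup hab (hθ.1.refl c)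

lemma inf_right (hθ : LatCon L θ) (hab : θ a b) (c : L) : θ (a ⊓ c) (b ⊓ c) :=
  hθ.inf hab (hθ.1.refl c)

lemma comap (hθ : LatCon L θ) (f : LatticeHom M L) : LatCon M fun s t => θ (f s) (f t) := by
  refine ⟨hθ.1.comap f, fun s t s' t' h h' => ?_⟩
  simp only [map_sup, map_inf]
  exact ⟨hθ.sup h h', hθ.inf h h'⟩

end LatCon

/-- The closure operator `(x, y, z) ↦ ((x ⊔ y) ⊓ (x ⊔ z), (x ⊔ y) ⊓ (y ⊔ z), (x ⊔ z) ⊓ (y ⊔ z))`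
on triples of elements of a lattice, whose closed elements are the Boolean triples. -/
def booleanClosure (L : Type*) [Lattice L] : ClosureOperator (L × L × L) :=
  .mk' (fun (x, y, z) => ((x ⊔ y) ⊓ (x ⊔ z), (x ⊔ y) ⊓ (y ⊔ z), (x ⊔ z) ⊓ (y ⊔ z)))
    (fun _ _ ⟨hx, hy, hz⟩ => ⟨inf_le_inf (sup_le_sup hx hy) (sup_le_sup hx hz),
      inf_le_inf (sup_le_sup hx hy) (sup_le_sup hy hz),
      inf_le_inf (sup_le_sup hx hz) (sup_le_sup hy hz)⟩)
    (fun _ => ⟨le_inf le_sup_left le_sup_left, le_inf le_sup_right le_sup_left,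
      le_inf le_sup_right le_sup_right⟩)
    -- Closing a triple does not change the pairwise joins of its components.
    (fun _ => ⟨inf_le_inf (sup_le inf_le_left inf_le_left) (sup_le inf_le_right inf_le_left),
      inf_le_inf (sup_le inf_le_left inf_le_left) (sup_le inf_le_right inf_le_right),
      inf_le_inf (sup_le inf_le_right inf_le_left) (sup_le inf_le_right inf_le_right)⟩)

lemma booleanClosure_isClosed_iff {L : Type*} [Lattice L] {x y z : L} :
    (booleanClosure L).IsClosed (x, y, z) ↔
      (x ⊔ y) ⊓ (x ⊔ z) = x ∧ (x ⊔ y) ⊓ (y ⊔ z) = y ∧ (x ⊔ z) ⊓ (y ⊔ z) = z := by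
  rw [← Prod.mk_inj, ← Prod.mk_inj]
  exact (booleanClosure L).isClosed_iff

/-- The lattice of Boolean triples of `L`: the triples `(x, y, z)` with `x = (x ⊔ y) ⊓ (x ⊔ z)`,
`y = (x ⊔ y) ⊓ (y ⊔ z)` and `z = (x ⊔ z) ⊓ (y ⊔ z)`, ordered componentwise. It is commonly
denoted by `M₃⟨L⟩`. -/
def BooleanTriple (L : Type*) [Lattice L] : Type _ :=
  (booleanClosure L).Closeds

namespace BooleanTriple

variable {L : Type*} [Lattice L]

instance : PartialOrder (BooleanTriple L) :=
  inferInstanceAs (PartialOrder (booleanClosure L).Closeds)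

instance : Lattice (BooleanTriple L) :=
  (booleanClosure L).gi.liftLattice

/-- The first component of a Boolean triple. -/
def x (s : BooleanTriple L) : L := s.1.1

/-- The second component of a Boolean triple. -/
def y (s : BooleanTriple L) : L := s.1.2.1

/-- The third component of a Boolean triple. -/
def z (s : BooleanTriple L) : L := s.1.2.2

@[ext]
lemma ext {s t : BooleanTriple L} (hx : s.x = t.x) (hy : s.y = t.y) (hz : s.z = t.z) : s = t :=
  Subtype.ext (Prod.ext hx (Prod.ext hy hz))

@[simp] lemma sup_x (s t : BooleanTriple L) :
    (s ⊔ t).x = (s.x ⊔ t.x ⊔ (s.y ⊔ t.y)) ⊓ (s.x ⊔ t.x ⊔ (s.z ⊔ t.z)) := rfl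
@[simp] lemma sup_y (s t : BooleanTriple L) :
    (s ⊔ t).y = (s.x ⊔ t.x ⊔ (s.y ⊔ t.y)) ⊓ (s.y ⊔ t.y ⊔ (s.z ⊔ t.z)) := rfl
@[simp] lemma sup_z (s t : BooleanTriple L) :
    (s ⊔ t).z = (s.x ⊔ t.x ⊔ (s.z ⊔ t.z)) ⊓ (s.y ⊔ t.y ⊔ (s.z ⊔ t.z)) := rfl

lemma y_inf_z_le_x (s : BooleanTriple L) : s.y ⊓ s.z ≤ s.x :=
  (inf_le_inf le_sup_right le_sup_right).trans_eq (booleanClosure_isClosed_iff.1 s.2).1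

lemma x_inf_z_le_y (s : BooleanTriple L) : s.x ⊓ s.z ≤ s.y :=
  (inf_le_inf le_sup_left le_sup_right).trans_eq (booleanClosure_isClosed_iff.1 s.2).2.1

lemma x_inf_y_le_z (s : BooleanTriple L) : s.x ⊓ s.y ≤ s.z :=
  (inf_le_inf le_sup_left le_sup_left).trans_eq (booleanClosure_isClosed_iff.1 s.2).2.2

lemma inf_y_eq_inf_z (s : BooleanTriple L) {u : L} (hu : u ≤ s.x) : u ⊓ s.y = u ⊓ s.z :=
  le_antisymm (le_inf inf_le_left ((inf_le_inf_right _ hu).trans s.x_inf_y_le_z))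
    (le_inf inf_le_left ((inf_le_inf_right _ hu).trans s.x_inf_z_le_y))

lemma inf_x_eq_inf_z (s : BooleanTriple L) {u : L} (hu : u ≤ s.y) : u ⊓ s.x = u ⊓ s.z :=
  le_antisymm (le_inf inf_le_left ((le_inf inf_le_right (inf_le_left.trans hu)).trans
      s.x_inf_y_le_z))
    (le_inf inf_le_left ((inf_le_inf_right _ hu).trans s.y_inf_z_le_x))

/-- The Boolean triple `(x, y, x ⊓ y)`, the least one with first components `x` and `y`. -/
def ofXY (x y : L) : BooleanTriple L :=
  ⟨(x, y, x ⊓ y), booleanClosure_isClosed_iff.2 (by simp)⟩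

/-- The Boolean triple `(y ⊓ z, y, z)`, the least one with last components `y` and `z`. -/
def ofYZ (y z : L) : BooleanTriple L :=
  ⟨(y ⊓ z, y, z), booleanClosure_isClosed_iff.2 (by simp)⟩

@[simp] lemma ofXY_x (x y : L) : (ofXY x y).x = x := rfl
@[simp] lemma ofXY_y (x y : L) : (ofXY x y).y = y := rfl
@[simp] lemma ofXY_z (x y : L) : (ofXY x y).z = x ⊓ y := rfl
@[simp] lemma ofYZ_x (y z : L) : (ofYZ y z).x = y ⊓ z := rfl
@[simp] lemma ofYZ_y (y z : L) : (ofYZ y z).y = y := rfl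
@[simp] lemma ofYZ_z (y z : L) : (ofYZ y z).z = z := rfl

lemma ofXY_inf_ofXY (x y x' y' : L) : ofXY x y ⊓ ofXY x' y' = ofXY (x ⊓ x') (y ⊓ y') :=
  ext rfl rfl (inf_inf_inf_comm x y x' y')

lemma ofXY_sup_ofXY (x y x' y' : L) : ofXY x y ⊔ ofXY x' y' = ofXY (x ⊔ x') (y ⊔ y') := by
  have hx : x ⊓ y ⊔ x' ⊓ y' ≤ x ⊔ x' := sup_le_sup inf_le_left inf_le_left
  have hy : x ⊓ y ⊔ x' ⊓ y' ≤ y ⊔ y' := sup_le_sup inf_le_right inf_le_right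
  ext
  · simp only [sup_x, ofXY_x, ofXY_y, ofXY_z, sup_eq_left.2 hx, inf_eq_right, le_sup_left]
  · simp only [sup_y, ofXY_x, ofXY_y, ofXY_z, sup_eq_left.2 hy, inf_eq_right, le_sup_right]
  · simp only [sup_z, ofXY_x, ofXY_y, ofXY_z, sup_eq_left.2 hx, sup_eq_left.2 hy]

lemma inf_ofXY_of_le_x (s : BooleanTriple L) {x : L} (hx : x ≤ s.x) (y : L) :
    s ⊓ ofXY x y = ofXY x (s.y ⊓ y) := by
  refine ext (inf_eq_right.2 hx) rfl ?_
  calc s.z ⊓ (x ⊓ y) = x ⊓ s.z ⊓ y := by ac_rfl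
    _ = x ⊓ s.y ⊓ y := by rw [s.inf_y_eq_inf_z hx]
    _ = x ⊓ (s.y ⊓ y) := inf_assoc ..

lemma inf_ofXY_of_le_y (s : BooleanTriple L) (x : L) {y : L} (hy : y ≤ s.y) :
    s ⊓ ofXY x y = ofXY (s.x ⊓ x) y := by
  refine ext rfl (inf_eq_right.2 hy) ?_
  calc s.z ⊓ (x ⊓ y) = y ⊓ s.z ⊓ x := by ac_rfl
    _ = y ⊓ s.x ⊓ x := by rw [s.inf_x_eq_inf_z hy]
    _ = s.x ⊓ x ⊓ y := by ac_rfl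

lemma inf_ofYZ_of_le_y (s : BooleanTriple L) {y : L} (hy : y ≤ s.y) (z : L) :
    s ⊓ ofYZ y z = ofYZ y (s.z ⊓ z) := by
  refine ext ?_ (inf_eq_right.2 hy) rfl
  calc s.x ⊓ (y ⊓ z) = y ⊓ s.x ⊓ z := by ac_rfl
    _ = y ⊓ s.z ⊓ z := by rw [s.inf_x_eq_inf_z hy]
    _ = y ⊓ (s.z ⊓ z) := inf_assoc ..

lemma ofXY_x_y_sup_ofYZ_z (s : BooleanTriple L) {u : L} (hu : u ≤ s.y) :
    ofXY s.x s.y ⊔ ofYZ u s.z = s := by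
  have hXY : ofXY s.x s.y ≤ s := ⟨le_rfl, le_rfl, s.x_inf_y_le_z⟩
  have hYZ : ofYZ u s.z ≤ s := ⟨(inf_le_inf_right _ hu).trans s.y_inf_z_le_x, hu, le_rfl⟩
  have hXY' : ofXY s.x s.y ≤ ofXY s.x s.y ⊔ ofYZ u s.z := le_sup_left
  have hYZ' : ofYZ u s.z ≤ ofXY s.x s.y ⊔ ofYZ u s.z := le_sup_right
  exact le_antisymm (sup_le hXY hYZ) ⟨hXY'.1, hXY'.2.1, hYZ'.2.2⟩

lemma ofXY_sup_ofYZ_x {q y a b : L} (hqy : q ≤ y) (hay : a ≤ y) (hyb : y ≤ b) :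
    (ofXY q y ⊔ ofYZ a b).x = y := by
  simp [hqy, hay, hyb, hqy.trans hyb, hay.trans hyb]

lemma ofYZ_sup_ofXY_x {q z a b : L} (hqz : q ≤ z) (hzb : z ≤ b) (hab : a ≤ b) :
    (ofYZ a z ⊔ ofXY q b).x = z := by
  have hazb : a ⊓ z ≤ b := inf_le_left.trans hab
  simp [hqz, hab, hzb, hqz.trans hzb, hazb]

lemma ofXY_sup_ofYZ_inf_ofXY {q y a b : L} (hqy : q ≤ y) (hay : a ≤ y) (hyb : y ≤ b) :
    (ofXY y a ⊔ ofYZ a b) ⊓ ofXY q b = ofXY q y := by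
  have hab : a ≤ b := hay.trans hyb
  have hx : (ofXY y a ⊔ ofYZ a b).x = y := by simp [hay, hyb, hab]
  have hy : (ofXY y a ⊔ ofYZ a b).y = y := by simp [hay, hyb, hab]
  rw [inf_ofXY_of_le_x _ (hqy.trans_eq hx.symm), hy, inf_eq_left.2 hyb]

lemma ofXY_sup_ofXY_inf_ofYZ {q z a b : L} (hqz : q ≤ z) (hzb : z ≤ b) (hab : a ≤ b) :
    (ofXY z a ⊔ ofXY q b) ⊓ ofYZ a b = ofYZ a z := by
  rw [ofXY_sup_ofXY, sup_eq_left.2 hqz, sup_eq_right.2 hab, inf_ofYZ_of_le_y _ hab, ofXY_z,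
    inf_assoc, inf_idem, inf_eq_left.2 hzb]

/-- The extension of a binary relation to Boolean triples by components. -/
def Componentwise (θ : L → L → Prop) (s t : BooleanTriple L) : Prop :=
  θ s.x t.x ∧ θ s.y t.y ∧ θ s.z t.z

lemma latCon_componentwise {θ : L → L → Prop} (hθ : LatCon L θ) :
    LatCon (BooleanTriple L) (Componentwise θ) := by
  refine ⟨⟨fun s => ⟨hθ.1.refl _, hθ.1.refl _, hθ.1.refl _⟩,
    fun ⟨hx, hy, hz⟩ => ⟨hθ.1.symm hx, hθ.1.symm hy, hθ.1.symm hz⟩,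
    fun ⟨hx, hy, hz⟩ ⟨hx', hy', hz'⟩ =>
      ⟨hθ.1.trans hx hx', hθ.1.trans hy hy', hθ.1.trans hz hz'⟩⟩, ?_⟩
  rintro s t s' t' ⟨hx, hy, hz⟩ ⟨hx', hy', hz'⟩
  have hX := hθ.sup hx hx'
  have hY := hθ.sup hy hy'
  have hZ := hθ.sup hz hz'
  exact ⟨⟨hθ.inf (hθ.sup hX hY) (hθ.sup hX hZ), hθ.inf (hθ.sup hX hY) (hθ.sup hY hZ),
    hθ.inf (hθ.sup hX hZ) (hθ.sup hY hZ)⟩, hθ.inf hx hx', hθ.inf hy hy', hθ.inf hz hz'⟩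

/-- The lattice of Boolean triples `(x, y, z)` with `a ≤ y ≤ b` and `z ≤ b`, which serves as the
extension of `L`. The elements `a` and `b` stand in for the bounds that `L` may lack. -/
def truncation (a b : L) : Sublattice (BooleanTriple L) where
  carrier := {s | a ≤ s.y ∧ s.y ≤ b ∧ s.z ≤ b}
  supClosed' := fun _ ⟨hay, hyb, hzb⟩ _ ⟨_, hyb', hzb'⟩ =>
    have hb : _ ≤ b := sup_le (sup_le hyb hyb') (sup_le hzb hzb')
    ⟨(hay.trans le_sup_left).trans (le_inf le_sup_right le_sup_left), inf_le_right.trans hb,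
      inf_le_right.trans hb⟩
  infClosed' := fun _ ⟨hay, hyb, hzb⟩ _ ⟨hay', _, _⟩ =>
    ⟨le_inf hay hay', inf_le_left.trans hyb, inf_le_left.trans hzb⟩

namespace truncation

variable {a b : L}

/-- The embedding `x ↦ (x, a, x ⊓ a)` of a lattice into the truncation. -/
def embedding (hab : a ≤ b) : LatticeHom L (truncation a b) where
  toFun x := ⟨ofXY x a, le_rfl, hab, inf_le_right.trans hab⟩
  map_sup' x x' := Subtype.ext <| by simp [ofXY_sup_ofXY]
  map_inf' x x' := Subtype.ext <| by simp [ofXY_inf_ofXY]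

/-- The triple `(q, b, q ⊓ b)`. For small `q`, the meet with it isolates the second component of a
triple. -/
def yMask (hab : a ≤ b) (q : L) : truncation a b :=
  ⟨ofXY q b, hab, le_rfl, inf_le_right⟩

/-- The triple `(a, a, b)`, written `(a ⊓ b, a, b)`. The meet with it isolates the third component
of a triple. -/
def zMask (hab : a ≤ b) : truncation a b :=
  ⟨ofYZ a b, le_rfl, hab, le_rfl⟩

lemma inf_embedding (hab : a ≤ b) (s : truncation a b) {w : L} (hw : s.1.x ≤ w) :
    s ⊓ embedding hab w = embedding hab s.1.x := by
  apply Subtype.ext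
  calc s.1 ⊓ ofXY w a = ofXY (s.1.x ⊓ w) a := inf_ofXY_of_le_y _ _ s.2.1
    _ = ofXY s.1.x a := by rw [inf_eq_left.2 hw]

lemma inf_yMask (hab : a ≤ b) (s : truncation a b) {q : L} (hq : q ≤ s.1.x) :
    (s ⊓ yMask hab q).1 = ofXY q s.1.y := by
  calc s.1 ⊓ ofXY q b = ofXY q (s.1.y ⊓ b) := inf_ofXY_of_le_x _ hq _
    _ = ofXY q s.1.y := by rw [inf_eq_left.2 s.2.2.1]

lemma inf_zMask (hab : a ≤ b) (s : truncation a b) :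
    (s ⊓ zMask hab).1 = ofYZ a s.1.z := by
  calc s.1 ⊓ ofYZ a b = ofYZ a (s.1.z ⊓ b) := inf_ofYZ_of_le_y _ s.2.1 _
    _ = ofYZ a s.1.z := by rw [inf_eq_left.2 s.2.2.2]

lemma inf_yMask_sup_zMask_x (hab : a ≤ b) (s : truncation a b) {q : L} (hqa : q ≤ a)
    (hqx : q ≤ s.1.x) : (s ⊓ yMask hab q ⊔ zMask hab).1.x = s.1.y := by
  rw [Sublattice.coe_sup, inf_yMask hab s hqx]
  exact ofXY_sup_ofYZ_x (hqa.trans s.2.1) s.2.1 s.2.2.1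

lemma inf_zMask_sup_yMask_x (hab : a ≤ b) (s : truncation a b) {q : L} (hqz : q ≤ s.1.z) :
    (s ⊓ zMask hab ⊔ yMask hab q).1.x = s.1.z := by
  rw [Sublattice.coe_sup, inf_zMask]
  exact ofYZ_sup_ofXY_x hqz s.2.2.2 hab

lemma embedding_y_sup_zMask_inf_yMask (hab : a ≤ b) (s : truncation a b) {q : L} (hqa : q ≤ a)
    (hqx : q ≤ s.1.x) :
    (embedding hab s.1.y ⊔ zMask hab) ⊓ yMask hab q = s ⊓ yMask hab q := by
  apply Subtype.ext
  rw [inf_yMask hab s hqx]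
  exact ofXY_sup_ofYZ_inf_ofXY (hqa.trans s.2.1) s.2.1 s.2.2.1

lemma embedding_z_sup_yMask_inf_zMask (hab : a ≤ b) (s : truncation a b) {q : L}
    (hqz : q ≤ s.1.z) :
    (embedding hab s.1.z ⊔ yMask hab q) ⊓ zMask hab = s ⊓ zMask hab := by
  apply Subtype.ext
  rw [inf_zMask hab s]
  exact ofXY_sup_ofXY_inf_ofYZ hqz s.2.2.2 hab

lemma embedding_x_sup_inf_yMask_sup_inf_zMask (hab : a ≤ b) (s : truncation a b) {q : L}
    (hq : q ≤ s.1.x) :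
    embedding hab s.1.x ⊔ s ⊓ yMask hab q ⊔ s ⊓ zMask hab = s := by
  apply Subtype.ext
  rw [Sublattice.coe_sup, Sublattice.coe_sup, inf_yMask hab s hq, inf_zMask]
  calc ofXY s.1.x a ⊔ ofXY q s.1.y ⊔ ofYZ a s.1.z = ofXY s.1.x s.1.y ⊔ ofYZ a s.1.z := by
        rw [ofXY_sup_ofXY, sup_eq_left.2 hq, sup_eq_right.2 s.2.1]
    _ = s.1 := ofXY_x_y_sup_ofYZ_z s.1 s.2.1

section Congruence

variable {Θ : truncation a b → truncation a b → Prop} {s t : truncation a b}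

lemma rel_embedding_x (hΘ : LatCon (truncation a b) Θ) (hab : a ≤ b) (h : Θ s t) :
    Θ (embedding hab s.1.x) (embedding hab t.1.x) := by
  rw [← inf_embedding hab s le_sup_left, ← inf_embedding hab t le_sup_right]
  exact hΘ.inf_right h (embedding hab (s.1.x ⊔ t.1.x))

lemma rel_inf_yMask_iff (hΘ : LatCon (truncation a b) Θ) (hab : a ≤ b) {q : L} (hqa : q ≤ a)
    (hqs : q ≤ s.1.x) (hqt : q ≤ t.1.x) :
    Θ (s ⊓ yMask hab q) (t ⊓ yMask hab q) ↔ Θ (embedding hab s.1.y) (embedding hab t.1.y) := by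
  constructor <;> intro h
  · have hx := rel_embedding_x hΘ hab (hΘ.sup_right h (zMask hab))
    rwa [inf_yMask_sup_zMask_x hab s hqa hqs, inf_yMask_sup_zMask_x hab t hqa hqt] at hx
  · rw [← embedding_y_sup_zMask_inf_yMask hab s hqa hqs,
      ← embedding_y_sup_zMask_inf_yMask hab t hqa hqt]
    exact hΘ.inf_right (hΘ.sup_right h _) _

lemma rel_inf_zMask_iff (hΘ : LatCon (truncation a b) Θ) (hab : a ≤ b) :
    Θ (s ⊓ zMask hab) (t ⊓ zMask hab) ↔ Θ (embedding hab s.1.z) (embedding hab t.1.z) := by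
  have hs : s.1.z ⊓ t.1.z ≤ s.1.z := inf_le_left
  have ht : s.1.z ⊓ t.1.z ≤ t.1.z := inf_le_right
  constructor <;> intro h
  · have hx := rel_embedding_x hΘ hab (hΘ.sup_right h (yMask hab (s.1.z ⊓ t.1.z)))
    rwa [inf_zMask_sup_yMask_x hab s hs, inf_zMask_sup_yMask_x hab t ht] at hx
  · rw [← embedding_z_sup_yMask_inf_zMask hab s hs, ← embedding_z_sup_yMask_inf_zMask hab t ht]
    exact hΘ.inf_right (hΘ.sup_right h _) _

lemma rel_iff_componentwise (hΘ : LatCon (truncation a b) Θ) (hab : a ≤ b) :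
    Θ s t ↔ Componentwise (fun u v => Θ (embedding hab u) (embedding hab v)) s.1 t.1 := by
  let q := a ⊓ (s.1.x ⊓ t.1.x)
  have hqs : q ≤ s.1.x := inf_le_right.trans inf_le_left
  have hqt : q ≤ t.1.x := inf_le_right.trans inf_le_right
  have hy := rel_inf_yMask_iff hΘ hab inf_le_left hqs hqt
  have hz := rel_inf_zMask_iff hΘ hab (s := s) (t := t)
  constructor
  · intro h
    exact ⟨rel_embedding_x hΘ hab h, hy.1 (hΘ.inf_right h _), hz.1 (hΘ.inf_right h _)⟩
  · rintro ⟨hx', hy', hz'⟩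
    rw [← embedding_x_sup_inf_yMask_sup_inf_zMask hab s hqs,
      ← embedding_x_sup_inf_yMask_sup_inf_zMask hab t hqt]
    exact hΘ.sup (hΘ.sup hx' (hy.2 hy')) (hz.2 hz')

end Congruence

lemma componentwise_embedding_iff (hab : a ≤ b) {θ : L → L → Prop} (hθ : LatCon L θ) {u v : L} :
    Componentwise θ (embedding hab u).1 (embedding hab v).1 ↔ θ u v :=
  ⟨fun h => h.1, fun h => ⟨h, hθ.1.refl a, hθ.inf_right h a⟩⟩

lemma embedding_injective (hab : a ≤ b) : Function.Injective (embedding hab) :=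
  fun _ _ h => congrArg (fun s => s.1.x) h

lemma embedding_not_surjective (hab : a < b) : ¬ Function.Surjective (embedding hab.le) := by
  intro h
  obtain ⟨u, hu⟩ := h (yMask hab.le a)
  exact hab.ne (congrArg (fun s => s.1.y) hu)

lemma isProperCPExt_embedding (hab : a < b) :
    IsProperCPExt L (truncation a b) (embedding hab.le) := by
  refine ⟨embedding_injective hab.le, embedding_not_surjective hab, map_sup _, map_inf _,
    fun θ hθ => ⟨fun s t => Componentwise θ s.1 t.1, ⟨?_, ?_⟩, ?_⟩⟩
  · exact (latCon_componentwise hθ).comap (truncation a b).subtype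
  · exact fun u v => componentwise_embedding_iff hab.le hθ
  · rintro Θ ⟨hΘ, hΘθ⟩
    obtain rfl : (fun u v => Θ (embedding hab.le u) (embedding hab.le v)) = θ :=
      funext₂ fun u v => propext (hΘθ u v)
    exact funext₂ fun s t => propext (rel_iff_componentwise hΘ hab.le)

end truncation

end BooleanTriple

/-- Every lattice with more than one element has a proper congruence-preserving
extension. -/
theorem exists_proper_congruencePreserving_extension
    (L : Type u) [Lattice L] [Nontrivial L] :
    ∃ (K : Type u) (instK : Lattice K) (f : L → K), @IsProperCPExt L _ K instK f := by
  obtain ⟨c, d, hcd⟩ := exists_pair_ne L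
  exact ⟨BooleanTriple.truncation (c ⊓ d) (c ⊔ d), inferInstance, _,
    BooleanTriple.truncation.isProperCPExt_embedding (inf_lt_sup.2 hcd)⟩
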